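/- Let Y be a Banach space. If the pair (c₀, Y) has the Bishop–Phelps–Bollobás property (BPBp), then the pair (c₀, Y) has the BPBp for compact operators. -/

import Mathlib

open MeasureTheory

noncomputable section

/-- A pair `(X, Y)` of normed spaces has the Bishop–Phelps–Bollobás property for compact
operators with the function `η`. -/
def BPBpCompactWith (𝕜 : Type*) [RCLike 𝕜] (X Y : Type*) [NormedAddCommGroup X]
    [NormedSpace 𝕜 X] [NormedAddCommGroup Y] [NormedSpace 𝕜 Y] (η : ℝ → ℝ) : Prop :=
  ∀ ε : ℝ, 0 < ε → 0 < η ε ∧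
    ∀ T : X →L[𝕜] Y, IsCompactOperator T → ‖T‖ = 1 →
      ∀ x₀ : X, ‖x₀‖ = 1 → 1 - η ε < ‖T x₀‖ →
        ∃ S : X →L[𝕜] Y, ∃ x₁ : X, IsCompactOperator S ∧ ‖S‖ = 1 ∧ ‖x₁‖ = 1 ∧
          ‖S x₁‖ = 1 ∧ ‖x₀ - x₁‖ < ε ∧ ‖S - T‖ < ε

/-- A pair `(X, Y)` has the Bishop–Phelps–Bollobás property for compact operators. -/
def BPBpCompact (𝕜 : Type*) [RCLike 𝕜] (X Y : Type*) [NormedAddCommGroup X]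
    [NormedSpace 𝕜 X] [NormedAddCommGroup Y] [NormedSpace 𝕜 Y] : Prop :=
  ∃ η : ℝ → ℝ, BPBpCompactWith 𝕜 X Y η
/-- A pair (X, Y) has the Bishop–Phelps–Bollobás property (for all bounded operators). -/
def BPBp (𝕜 : Type*) [RCLike 𝕜] (X Y : Type*) [NormedAddCommGroup X]
    [NormedSpace 𝕜 X] [NormedAddCommGroup Y] [NormedSpace 𝕜 Y] : Prop :=
  ∃ η : ℝ → ℝ, ∀ ε : ℝ, 0 < ε → 0 < η ε ∧
    ∀ T : X →L[𝕜] Y, ‖T‖ = 1 →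
      ∀ x₀ : X, ‖x₀‖ = 1 → 1 - η ε < ‖T x₀‖ →
        ∃ S : X →L[𝕜] Y, ∃ x₁ : X, ‖S‖ = 1 ∧ ‖x₁‖ = 1 ∧
          ‖S x₁‖ = 1 ∧ ‖x₀ - x₁‖ < ε ∧ ‖S - T‖ < ε

theorem gen_compact {𝕜 X Y : Type*} [RCLike 𝕜] [NormedAddCommGroup X] [NormedSpace 𝕜 X]
    [NormedAddCommGroup Y] [NormedSpace 𝕜 Y] (T : X →L[𝕜] Y) (hT : IsCompactOperator T) :
    IsCompact (closure (T '' Metric.closedBall 0 1)) :=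
  IsCompactOperator.isCompact_closure_image_closedBall (f := (T : X →ₗ[𝕜] Y)) hT 1

theorem gen_rescale {𝕜 X Y : Type*} [RCLike 𝕜] [NormedAddCommGroup X] [NormedSpace 𝕜 X]
    [NormedAddCommGroup Y] [NormedSpace 𝕜 Y] (A : X →L[𝕜] Y) (hApos : 0 < ‖A‖) :
    ∃ c : 𝕜, ‖c • A‖ = 1 ∧ ‖c • A - A‖ = |1 - ‖A‖| := by
  refine ⟨((‖A‖⁻¹ : ℝ) : 𝕜), ?_, ?_⟩
  · rw [norm_smul, RCLike.norm_ofReal, abs_of_pos (by positivity), inv_mul_cancel₀ hApos.ne']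
  · have : ((‖A‖⁻¹ : ℝ) : 𝕜) • A - A = (((‖A‖⁻¹ - 1 : ℝ)) : 𝕜) • A := by
      rw [RCLike.ofReal_sub, RCLike.ofReal_one, sub_smul, one_smul]
    rw [this, norm_smul, RCLike.norm_ofReal]
    calc |‖A‖⁻¹ - 1| * ‖A‖ = |‖A‖⁻¹ - 1| * |‖A‖| := by rw [abs_of_pos hApos]
      _ = |1 - ‖A‖| := by rw [← abs_mul, sub_mul, inv_mul_cancel₀ hApos.ne', one_mul]

theorem c0_norm_le {𝕜 : Type*} [RCLike 𝕜] {f : ZeroAtInftyContinuousMap ℕ 𝕜} {C : ℝ}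
    (hC : 0 ≤ C) : ‖f‖ ≤ C ↔ ∀ k, ‖f k‖ ≤ C := by
  rw [← ZeroAtInftyContinuousMap.norm_toBCF_eq_norm, BoundedContinuousFunction.norm_le hC]
  rfl

theorem c0_apply_le {𝕜 : Type*} [RCLike 𝕜] (f : ZeroAtInftyContinuousMap ℕ 𝕜) (k : ℕ) :
    ‖f k‖ ≤ ‖f‖ := (c0_norm_le (norm_nonneg f)).1 le_rfl k

theorem c0_tail {𝕜 : Type*} [RCLike 𝕜] (f : ZeroAtInftyContinuousMap ℕ 𝕜) {ε : ℝ}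
    (hε : 0 < ε) : ∃ N, ∀ k ≥ N, ‖f k‖ < ε := by
  have h := f.zero_at_infty'
  rw [Filter.cocompact_eq_cofinite, Nat.cofinite_eq_atTop, Metric.tendsto_atTop] at h
  obtain ⟨N, hN⟩ := h ε hε
  refine ⟨N, fun k hk => ?_⟩
  simpa using hN k hk

/-- restriction to the first coordinates -/
def c0R (𝕜 : Type*) [RCLike 𝕜] (N : ℕ) : ZeroAtInftyContinuousMap ℕ 𝕜 →L[𝕜] (Fin N → 𝕜) :=
  LinearMap.mkContinuous
    { toFun := fun f i => f i
      map_add' := fun _ _ => rfl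
      map_smul' := fun _ _ => rfl } 1 (fun f => by
        rw [one_mul, pi_norm_le_iff_of_nonneg (norm_nonneg _)]
        exact fun i => c0_apply_le f i)

/-- extension by zero -/
def c0J (𝕜 : Type*) [RCLike 𝕜] (N : ℕ) : (Fin N → 𝕜) →ₗ[𝕜] ZeroAtInftyContinuousMap ℕ 𝕜 where
  toFun x :=
    { toFun := fun k => if h : k < N then x ⟨k, h⟩ else 0
      continuous_toFun := continuous_of_discreteTopology
      zero_at_infty' := by
        rw [Filter.cocompact_eq_cofinite, Nat.cofinite_eq_atTop]
        refine tendsto_const_nhds.congr' ?_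
        filter_upwards [Filter.eventually_ge_atTop N] with k hk
        rw [dif_neg (not_lt.2 hk)] }
  map_add' x y := by
    ext k
    by_cases h : k < N <;> simp [h]
  map_smul' c x := by
    ext k
    by_cases h : k < N <;> simp [h]

/-- truncation -/
def c0P (𝕜 : Type*) [RCLike 𝕜] (N : ℕ) :
    ZeroAtInftyContinuousMap ℕ 𝕜 →L[𝕜] ZeroAtInftyContinuousMap ℕ 𝕜 :=
  (LinearMap.toContinuousLinearMap (c0J 𝕜 N)).comp (c0R 𝕜 N)

theorem c0P_apply {𝕜 : Type*} [RCLike 𝕜] (N : ℕ) (f : ZeroAtInftyContinuousMap ℕ 𝕜) (k : ℕ) :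
    c0P 𝕜 N f k = if k < N then f k else 0 := by
  change (if h : k < N then f k else 0) = _
  split_ifs <;> rfl

theorem c0P_compact {𝕜 : Type*} [RCLike 𝕜] (N : ℕ) : IsCompactOperator (c0P 𝕜 N) := by
  have h : IsCompactOperator (c0R 𝕜 N) := isCompactOperator_of_locallyCompactSpace_dom _
  exact h.clm_comp (LinearMap.toContinuousLinearMap (c0J 𝕜 N))

theorem c0P_norm_le {𝕜 : Type*} [RCLike 𝕜] (N : ℕ) (f : ZeroAtInftyContinuousMap ℕ 𝕜) :
    ‖c0P 𝕜 N f‖ ≤ ‖f‖ := by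
  rw [c0_norm_le (norm_nonneg _)]
  intro k
  rw [c0P_apply]
  split_ifs
  · exact c0_apply_le f k
  · simp

theorem c0P_comp {𝕜 : Type*} [RCLike 𝕜] {n N : ℕ} (h : n ≤ N)
    (f : ZeroAtInftyContinuousMap ℕ 𝕜) : c0P 𝕜 n (c0P 𝕜 N f) = c0P 𝕜 n f := by
  ext k
  simp only [c0P_apply]
  split_ifs <;> first | rfl | omega

theorem c0_sub_P_le {𝕜 : Type*} [RCLike 𝕜] (f : ZeroAtInftyContinuousMap ℕ 𝕜) {ε : ℝ}
    (hε : 0 < ε) : ∃ N, ‖f - c0P 𝕜 N f‖ ≤ ε := by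
  obtain ⟨N, hN⟩ := c0_tail f hε
  refine ⟨N, (c0_norm_le hε.le).2 fun k => ?_⟩
  rw [ZeroAtInftyContinuousMap.sub_apply, c0P_apply]
  split_ifs with h
  · simpa using hε.le
  · simpa using (hN k (not_lt.1 h)).le

theorem c0_compact_approx {𝕜 : Type*} [RCLike 𝕜] {Y : Type*}
    [NormedAddCommGroup Y] [NormedSpace 𝕜 Y]
    (T : ZeroAtInftyContinuousMap ℕ 𝕜 →L[𝕜] Y) (hT : IsCompactOperator T) {δ : ℝ} (hδ : 0 < δ) :
    ∃ n, ‖T - T.comp (c0P 𝕜 n)‖ < δ := by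
  by_contra! hcon
  have hv : ∀ n, ∃ v : ZeroAtInftyContinuousMap ℕ 𝕜, ‖v‖ ≤ 1 ∧ (∀ k < n, v k = 0) ∧
      δ / 2 ≤ ‖T v‖ := by
    intro n
    obtain ⟨x, hx1, hx2⟩ := (T - T.comp (c0P 𝕜 n)).exists_lt_apply_of_lt_opNorm
      (show δ / 2 < _ by linarith [hcon n])
    refine ⟨x - c0P 𝕜 n x, ?_, ?_, ?_⟩
    · rw [c0_norm_le zero_le_one]
      intro k
      rw [ZeroAtInftyContinuousMap.sub_apply, c0P_apply]
      split_ifs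
      · simp
      · simpa using (c0_apply_le x k).trans hx1.le
    · intro k hk
      rw [ZeroAtInftyContinuousMap.sub_apply, c0P_apply, if_pos hk, sub_self]
    · rw [map_sub]
      exact hx2.le
  choose v hv1 hv2 hv3 using hv
  have hK := gen_compact T hT
  obtain ⟨y, -, φ, hφ, hy⟩ := hK.tendsto_subseq (x := fun n => T (v n)) (fun n =>
    subset_closure ⟨v n, by simpa using hv1 n, rfl⟩)
  have hy1 : δ / 2 ≤ ‖y‖ := ge_of_tendsto' hy.norm (fun n => hv3 _)
  have hind : ∀ m : ℕ, ∃ u : ZeroAtInftyContinuousMap ℕ 𝕜, ∃ N : ℕ, ‖u‖ ≤ 1 ∧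
      (∀ k ≥ N, u k = 0) ∧ ‖T u - (m : 𝕜) • y‖ ≤ m * (δ / 4) := by
    intro m
    induction m with
    | zero => exact ⟨0, 0, by simp, by simp, by simp⟩
    | succ m ih =>
      obtain ⟨u, N, hu1, hu2, hu3⟩ := ih
      rw [Metric.tendsto_atTop] at hy
      obtain ⟨j, hj⟩ := hy (δ / 8) (by linarith)
      have hj' := hj (max j N) (le_max_left _ _)
      have hge : N ≤ φ (max j N) := (le_max_right _ _).trans (hφ.id_le _)
      simp only [Function.comp, dist_eq_norm] at hj'
      generalize φ (max j N) = p at hj' hge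
      have hpos : 0 < δ / 8 / (‖T‖ + 1) := by positivity
      obtain ⟨M, hM⟩ := c0_sub_P_le (v p) hpos
      have hT' : ‖T (v p) - T (c0P 𝕜 M (v p))‖ ≤ δ / 8 := by
        rw [← map_sub]
        refine (T.le_opNorm _).trans ?_
        calc ‖T‖ * ‖v p - c0P 𝕜 M (v p)‖ ≤ (‖T‖ + 1) * (δ / 8 / (‖T‖ + 1)) := by
              gcongr; linarith
          _ = δ / 8 := by field_simp
      refine ⟨u + c0P 𝕜 M (v p), max N M, ?_, ?_, ?_⟩
      · rw [c0_norm_le zero_le_one]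
        intro k
        rw [ZeroAtInftyContinuousMap.add_apply]
        by_cases hk : k < N
        · have : c0P 𝕜 M (v p) k = 0 := by
            rw [c0P_apply, hv2 p k (by omega), ite_self]
          rw [this, add_zero]
          exact (c0_apply_le u k).trans hu1
        · rw [hu2 k (by omega), zero_add]
          exact (c0_apply_le _ k).trans ((c0P_norm_le _ _).trans (hv1 p))
      · intro k hk
        rw [ZeroAtInftyContinuousMap.add_apply, hu2 k (by omega), c0P_apply,
          if_neg (by omega), zero_add]
      · have e : T (u + c0P 𝕜 M (v p)) - ((m + 1 : ℕ) : 𝕜) • y =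
            (T u - (m : 𝕜) • y) + ((T (v p) - y) - (T (v p) - T (c0P 𝕜 M (v p)))) := by
          rw [map_add]; push_cast; rw [add_smul, one_smul]; abel
        rw [e]
        refine (norm_add_le _ _).trans ?_
        have := norm_sub_le (T (v p) - y) (T (v p) - T (c0P 𝕜 M (v p)))
        push_cast
        linarith
  obtain ⟨m, hm⟩ := exists_nat_gt (‖T‖ / (δ / 4))
  rw [div_lt_iff₀ (by linarith)] at hm
  obtain ⟨u, N, hu1, -, hu3⟩ := hind m
  have h1 : ‖T u‖ ≤ ‖T‖ := by
    simpa using T.le_opNorm_of_le hu1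
  have h2 : ‖(m : 𝕜) • y‖ = m * ‖y‖ := by rw [norm_smul, RCLike.norm_natCast]
  have h3 := norm_sub_norm_le ((m : 𝕜) • y) (T u)
  rw [norm_sub_rev, h2] at h3
  have h4 : (m : ℝ) * (δ / 2) ≤ m * ‖y‖ := by gcongr
  linarith

theorem c0_attain {𝕜 : Type*} [RCLike 𝕜] {Y : Type*}
    [NormedAddCommGroup Y] [NormedSpace 𝕜 Y]
    (S : ZeroAtInftyContinuousMap ℕ 𝕜 →L[𝕜] Y) (hS : ‖S‖ = 1)
    (x : ZeroAtInftyContinuousMap ℕ 𝕜) (hx : ‖x‖ = 1) (hSx : ‖S x‖ = 1) (n : ℕ) :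
    ∃ N ≥ n, ‖S (c0P 𝕜 N x)‖ = 1 := by
  obtain ⟨N, hN⟩ := c0_tail x (show (0 : ℝ) < 1 / 2 by norm_num)
  refine ⟨max n N, le_max_left _ _, ?_⟩
  set M := max n N
  have hle : ∀ z : ZeroAtInftyContinuousMap ℕ 𝕜, ‖z‖ ≤ 1 → ‖S z‖ ≤ 1 := fun z hz => by
    simpa [hS] using S.le_opNorm_of_le hz
  have h1 := hle _ ((c0P_norm_le M x).trans hx.le)
  have h2 : ‖S (x + x - c0P 𝕜 M x)‖ ≤ 1 := by
    apply hle
    rw [c0_norm_le zero_le_one]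
    intro k
    rw [ZeroAtInftyContinuousMap.sub_apply, ZeroAtInftyContinuousMap.add_apply, c0P_apply]
    split_ifs with h
    · simpa [hx] using c0_apply_le x k
    · have := hN k (by omega)
      rw [sub_zero]
      refine (norm_add_le _ _).trans ?_
      linarith
  refine le_antisymm h1 ?_
  have h3 : ‖S x + S x‖ = 2 := by
    rw [← two_smul 𝕜 (S x), norm_smul, hSx]; simp
  have h4 := norm_add_le (S (c0P 𝕜 M x)) (S (x + x - c0P 𝕜 M x))
  rw [← map_add, add_sub_cancel, map_add, h3] at h4
  linarith

/-- Corollary 3.3: if (c₀, Y) has the BPBp, then it has the BPBp for compact operators. -/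
theorem bpbp_compact_c0_of_bpbp {𝕜 : Type*} [RCLike 𝕜] {Y : Type*}
    [NormedAddCommGroup Y] [NormedSpace 𝕜 Y] [CompleteSpace Y]
    (h : BPBp 𝕜 (ZeroAtInftyContinuousMap ℕ 𝕜) Y) :
    BPBpCompact 𝕜 (ZeroAtInftyContinuousMap ℕ 𝕜) Y := by
  obtain ⟨η, hη⟩ := h
  refine ⟨fun ε => η (ε / 2), fun ε hε => ?_⟩
  obtain ⟨hpos, H⟩ := hη (ε / 2) (by linarith)
  refine ⟨hpos, fun T hT hT1 x₀ hx₀ hTx => ?_⟩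
  have hTx' : 1 - η (ε / 2) < ‖T x₀‖ := hTx
  obtain ⟨δ, hδ0, hδ1, hδ2, hδ3⟩ : ∃ δ : ℝ, 0 < δ ∧ δ < 1 ∧ 2 * δ ≤ ε / 2 ∧
      2 * δ ≤ ‖T x₀‖ - (1 - η (ε / 2)) := by
    refine ⟨min (1 / 2) (min (ε / 4) ((‖T x₀‖ - (1 - η (ε / 2))) / 2)), ?_, ?_, ?_, ?_⟩
    · refine lt_min (by norm_num) (lt_min (by linarith) (by linarith))
    · exact (min_le_left _ _).trans_lt (by norm_num)
    · have := (min_le_right (1 / 2) (min (ε / 4) ((‖T x₀‖ - (1 - η (ε / 2))) / 2))).trans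
        (min_le_left _ _)
      linarith
    · have := (min_le_right (1 / 2) (min (ε / 4) ((‖T x₀‖ - (1 - η (ε / 2))) / 2))).trans
        (min_le_right _ _)
      linarith
  obtain ⟨n, hn⟩ := c0_compact_approx T hT hδ0
  set A := T.comp (c0P 𝕜 n) with hA
  have hA1 : |1 - ‖A‖| < δ := by
    rw [← hT1]; exact (abs_norm_sub_norm_le T A).trans_lt hn
  have hApos : 0 < ‖A‖ := by linarith [(abs_lt.1 hA1).2]
  obtain ⟨c, hB1, hBA⟩ := gen_rescale A hApos
  rw [← hBA] at hA1
  have hBT : ‖c • A - T‖ < 2 * δ := by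
    have e : c • A - T = (c • A - A) - (T - A) := by abel
    rw [e]
    linarith [norm_sub_le (c • A - A) (T - A)]
  have hBx : 1 - η (ε / 2) < ‖(c • A) x₀‖ := by
    have h1 : ‖(T - c • A) x₀‖ ≤ ‖T - c • A‖ := by
      simpa [hx₀] using (T - c • A).le_opNorm x₀
    have h2 := norm_sub_norm_le (T x₀) ((c • A) x₀)
    rw [norm_sub_rev T] at h1
    rw [_root_.sub_apply] at h1
    linarith
  obtain ⟨S, x₁, hS1, hx₁, hSx, hxx, hSB⟩ := H (c • A) hB1 x₀ hx₀ hBx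
  obtain ⟨N, hN, hSN⟩ := c0_attain S hS1 x₁ hx₁ hSx n
  have hle : ‖S.comp (c0P 𝕜 N)‖ ≤ 1 := by
    refine ContinuousLinearMap.opNorm_le_bound _ zero_le_one fun z => ?_
    have := S.le_opNorm (c0P 𝕜 N z)
    rw [hS1] at this
    have h2 := c0P_norm_le N z
    change ‖S (c0P 𝕜 N z)‖ ≤ _
    linarith
  refine ⟨S.comp (c0P 𝕜 N), x₁, (c0P_compact N).clm_comp S, le_antisymm hle ?_, hx₁, hSN,
    by linarith, ?_⟩
  · have := (S.comp (c0P 𝕜 N)).le_opNorm x₁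
    rw [hx₁, mul_one] at this
    exact hSN.symm.le.trans this
  · have hd : ‖S.comp (c0P 𝕜 N) - c • A‖ ≤ ‖S - c • A‖ := by
      refine ContinuousLinearMap.opNorm_le_bound _ (norm_nonneg _) fun z => ?_
      have e : (S.comp (c0P 𝕜 N) - c • A) z = (S - c • A) (c0P 𝕜 N z) := by
        simp only [hA, _root_.sub_apply, _root_.smul_apply,
          ContinuousLinearMap.comp_apply, c0P_comp hN]
      rw [e]
      refine ((S - c • A).le_opNorm _).trans ?_
      gcongr
      exact c0P_norm_le N z
    have e : S.comp (c0P 𝕜 N) - T = (S.comp (c0P 𝕜 N) - c • A) + (c • A - T) := by abel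
    rw [e]
    linarith [norm_add_le (S.comp (c0P 𝕜 N) - c • A) (c • A - T)]
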